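/- Let f_t = 1{a·x > t} be a halfspace on {-1,1}^n with a_1 ≥ a_2 ≥ ... ≥ a_n > 0 and E[f_t] ≤ 1/2. Then (1/2)·I_1(f_t) ≤ VB₁(f_t) ≤ (7/4)·I_1(f_t), where VB₁(f) = Pr_x[f(x) = 1 and there exists i with f(x ⊕ e_i) = 0] is the measure of the inner vertex boundary. -/

import Mathlib

open Finset

noncomputable section
open scoped Classical

/-- The ±1 value associated to a Boolean bit. -/
def sgn1 (b : Bool) : ℝ := if b then 1 else -1

/-- Probability of an event under the uniform measure on `{-1,1}^n`. -/
def cubePr (n : ℕ) (P : (Fin n → Bool) → Prop) : ℝ :=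
  ((univ.filter P).card : ℝ) / 2 ^ n

/-- Expectation of a function under the uniform measure on `{-1,1}^n`. -/
def cubeE (n : ℕ) (f : (Fin n → Bool) → ℝ) : ℝ := (∑ x, f x) / 2 ^ n

/-- The linear form `a · x = ∑ aᵢ xᵢ` on `{-1,1}^n`. -/
def lin (n : ℕ) (a : Fin n → ℝ) (x : Fin n → Bool) : ℝ := ∑ i, a i * sgn1 (x i)

/-- The halfspace `1{a · x > t}` as a 0/1-valued function. -/
def halfspace (n : ℕ) (a : Fin n → ℝ) (t : ℝ) (x : Fin n → Bool) : ℝ :=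
  if t < lin n a x then 1 else 0

/-- The influence of coordinate `i` on `f`: the probability that flipping
coordinate `i` changes the value of `f`. -/
def infl (n : ℕ) (i : Fin n) (f : (Fin n → Bool) → ℝ) : ℝ :=
  cubePr n (fun x => f x ≠ f (Function.update x i (!x i)))

/-- The degree-1 Fourier coefficient `f̂({i}) = E[f(x)·xᵢ]`. -/
def fCoeff (n : ℕ) (f : (Fin n → Bool) → ℝ) (i : Fin n) : ℝ :=
  cubeE n (fun x => f x * sgn1 (x i))

/-- The degree-1 Fourier weight `W¹(f) = ∑ᵢ f̂({i})²`. -/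
def W1 (n : ℕ) (f : (Fin n → Bool) → ℝ) : ℝ := ∑ i, (fCoeff n f i) ^ 2


/-- Sum of `f` over all signed sums of a list of weights. -/
def EE : List ℝ → (ℝ → ℝ) → ℝ
  | [], f => f 0
  | a :: l, f => EE l (fun s => f (s + a)) + EE l (fun s => f (s - a))

/-- Indicator of the half-open window. -/
def win (u v s : ℝ) : ℝ := if u < s ∧ s ≤ v then 1 else 0

/-- Number of signed sums in the window of half-width `c` around `t`. -/
def FF (c : ℝ) (l : List ℝ) (t : ℝ) : ℝ := EE l (win (t - c) (t + c))

/-- Iterated sum bounding the rest of the vertex boundary. -/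
def KK (c : ℝ) : List ℝ → ℝ → ℝ
  | [], _ => 0
  | a :: l, t => FF c l (t + a) + KK c l (t + a)

/-- The second term of the sum. -/
def F1 (c : ℝ) : List ℝ → ℝ → ℝ
  | [], _ => 0
  | a :: l, t => FF c l (t + a)

theorem EE_mono (l : List ℝ) : ∀ (f g : ℝ → ℝ), (∀ s, f s ≤ g s) → EE l f ≤ EE l g := by
  induction l with
  | nil => intro f g h; exact h 0
  | cons a l ih =>
    intro f g h
    exact add_le_add (ih _ _ fun s => h _) (ih _ _ fun s => h _)

theorem EE_add (l : List ℝ) : ∀ (f g : ℝ → ℝ), EE l (fun s => f s + g s) = EE l f + EE l g := by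
  induction l with
  | nil => intro f g; rfl
  | cons a l ih =>
    intro f g
    simp only [EE]
    rw [ih (fun s => f (s + a)) (fun s => g (s + a)), ih (fun s => f (s - a)) (fun s => g (s - a))]
    ring

theorem win_nonneg (u v s : ℝ) : 0 ≤ win u v s := by
  unfold win; split_ifs <;> norm_num

theorem FF_nonneg (c : ℝ) (l : List ℝ) (t : ℝ) : 0 ≤ FF c l t := by
  have h0 : ∀ l : List ℝ, EE l (fun _ => 0) = 0 := by
    intro l
    induction l with
    | nil => rfl
    | cons a l ih => simp [EE, ih]
  rw [← h0 l]
  exact EE_mono _ _ _ fun s => win_nonneg _ _ _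

/-- The reflection principle. -/
theorem reflect (d : ℝ) (l : List ℝ) : ∀ (h : ℝ) (f g : ℝ → ℝ), 0 < h →
    (∀ b ∈ l, 0 < b ∧ b ≤ d) →
    (∀ T T', (T - 2 * h - 2 * d < T' ∧ T' ≤ T - 2 * h) ∨ (T' = -T ∧ T < h) → f T ≤ g T') →
    EE l f ≤ EE l g := by
  induction l with
  | nil =>
    intro h f g hh _ H
    exact H 0 0 (Or.inr ⟨by simp, hh⟩)
  | cons a l ih =>
    intro h f g hh hl H
    obtain ⟨ha, had⟩ := hl a (by simp)
    have hl' : ∀ b ∈ l, 0 < b ∧ b ≤ d := fun b hb => hl b (by simp [hb])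
    have h1 : EE l (fun s => f (s + a)) ≤ EE l (fun s => g (s - a)) := by
      by_cases hc : h - a ≤ 0
      · apply EE_mono
        intro s
        apply H
        left
        constructor <;> linarith
      · apply ih (h - a) _ _ (by linarith) hl'
        intro T T' hT
        apply H
        rcases hT with ⟨h1, h2⟩ | ⟨h1, h2⟩
        · left; constructor <;> linarith
        · right; constructor <;> linarith
    have h2 : EE l (fun s => f (s - a)) ≤ EE l (fun s => g (s + a)) := by
      apply ih (h + a) _ _ (by linarith) hl'
      intro T T' hT
      apply H
      rcases hT with ⟨h1, h2⟩ | ⟨h1, h2⟩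
      · left; constructor <;> linarith
      · right; constructor <;> linarith
    simp only [EE]
    linarith

theorem FF_cons (c : ℝ) (a : ℝ) (l : List ℝ) (t : ℝ) :
    FF c (a :: l) t = FF c l (t - a) + FF c l (t + a) := by
  have h : ∀ (s : ℝ) , win (t - c) (t + c) (s + a) = win (t - a - c) (t - a + c) s := by
    intro s
    unfold win
    congr 1
    apply propext
    constructor <;> rintro ⟨h1, h2⟩ <;> constructor <;> linarith
  have h' : ∀ (s : ℝ) , win (t - c) (t + c) (s - a) = win (t + a - c) (t + a + c) s := by
    intro s
    unfold win
    congr 1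
    apply propext
    constructor <;> rintro ⟨h1, h2⟩ <;> constructor <;> linarith
  simp only [FF, EE, h, h']

theorem lemX (c a b t : ℝ) (l : List ℝ) (ht : 0 ≤ t) (hac : a ≤ c) (hba : b ≤ a) (hb : 0 < b)
    (hl : ∀ e ∈ l, 0 < e ∧ e ≤ b) : 2 * FF c l (t + a + b) ≤ FF c (a :: b :: l) t := by
  have key1 : EE l (win (t + a + b - c) (min (t + a + b + c) (t + c + b - a)))
      ≤ FF c l (t - a + b) := by
    apply EE_mono
    intro s
    unfold win
    split_ifs with h1 h2 h2 <;> try norm_num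
    apply h2
    simp only [le_min_iff] at h1
    constructor <;> linarith
  have key2 : EE l (win (t + c + b - a) (t + a + b + c)) ≤
      EE l (fun s => win (t + a - b - c) (t + a - b + c) s +
        win (t - a - b - c) (t - a - b + c) s) := by
    apply reflect b l b _ _ hb hl
    intro T T' hT
    by_cases h : t + c + b - a < T ∧ T ≤ t + a + b + c
    · rcases hT with ⟨h1, h2⟩ | ⟨h1, h2⟩
      · by_cases h3 : t + a - b - c < T'
        · have : win (t + a - b - c) (t + a - b + c) T' = 1 := if_pos ⟨h3, by linarith [h.2]⟩
          have h4 := win_nonneg (t - a - b - c) (t - a - b + c) T'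
          have : win (t + c + b - a) (t + a + b + c) T = 1 := if_pos h
          linarith
        · have : win (t - a - b - c) (t - a - b + c) T' = 1 :=
            if_pos ⟨by linarith [h.1], by linarith [h.2]⟩
          have h4 := win_nonneg (t + a - b - c) (t + a - b + c) T'
          have : win (t + c + b - a) (t + a + b + c) T = 1 := if_pos h
          linarith
      · linarith [h.1]
    · have : win (t + c + b - a) (t + a + b + c) T = 0 := if_neg h
      rw [this]
      exact add_nonneg (win_nonneg _ _ _) (win_nonneg _ _ _)
  have key3 : FF c l (t + a + b) ≤
      EE l (win (t + a + b - c) (min (t + a + b + c) (t + c + b - a))) +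
      EE l (win (t + c + b - a) (t + a + b + c)) := by
    rw [← EE_add]
    apply EE_mono
    intro s
    unfold win
    simp only [le_min_iff]
    split_ifs with h1 h2 h3 h3 <;> try norm_num
    exfalso
    rcases le_or_gt s (t + c + b - a) with h | h
    · exact h2 ⟨h1.1, h1.2, h⟩
    · exact h3 ⟨h, h1.2⟩
  rw [EE_add] at key2
  rw [FF_cons, FF_cons, FF_cons]
  have e1 : EE l (win (t + a - b - c) (t + a - b + c)) = FF c l (t + a - b) := rfl
  have e2 : EE l (win (t - a - b - c) (t - a - b + c)) = FF c l (t - a - b) := rfl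
  have e1 : EE l (fun s => win (t + a - b - c) (t + a - b + c) s) = FF c l (t + a - b) := rfl
  have e2 : EE l (fun s => win (t - a - b - c) (t - a - b + c) s) = FF c l (t - a - b) := rfl
  linarith

theorem win_pos {u v s : ℝ} (h1 : u < s) (h2 : s ≤ v) : win u v s = 1 := if_pos ⟨h1, h2⟩

theorem win_split (u m v s : ℝ) :
    win u v s ≤ win u (min v m) s + win m v s := by
  unfold win
  simp only [le_min_iff]
  split_ifs with h1 h2 h3 h3 <;> try norm_num
  exfalso
  rcases le_or_gt s m with h | h
  · exact h2 ⟨h1.1, h1.2, h⟩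
  · exact h3 ⟨h, h1.2⟩

theorem win_le {u v u' v' s s' : ℝ} (h : u < s → s ≤ v → u' < s' ∧ s' ≤ v') :
    win u v s ≤ win u' v' s' := by
  unfold win
  split_ifs with h1 h2 <;> try norm_num
  exact h2 (h h1.1 h1.2)

theorem lemY (c a b t : ℝ) (l : List ℝ) (ht : 0 ≤ t) (hac : a ≤ c) (hba : b ≤ a) (hb : 0 < b)
    (hl : ∀ e ∈ l, 0 < e ∧ e ≤ b) : 4 * FF c (b :: l) (t + a) ≤ 3 * FF c (a :: b :: l) t := by
  -- the all-minus pattern, split at `t + c - a + b`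
  have a0 : FF c l (t + a + b) ≤
      EE l (win (t + a + b - c) (min (t + a + b + c) (t + c - a + b))) +
      EE l (win (t + c - a + b) (t + a + b + c)) := by
    rw [← EE_add]
    exact EE_mono _ _ _ fun s => win_split _ _ _ _
  have a1 : EE l (win (t + a + b - c) (min (t + a + b + c) (t + c - a + b)))
      ≤ FF c l (t - a + b) := by
    apply EE_mono
    intro s
    apply win_le
    intro h1 h2
    simp only [le_min_iff] at h2
    constructor <;> linarith
  have a2 : EE l (win (t + c - a + b) (t + a + b + c)) ≤
      EE l (fun s => win (t - a + b - c) (t - a + b + c) s +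
        win (t - a - b - c) (t - a - b + c) s) := by
    apply reflect b l a _ _ (by linarith) hl
    intro T T' hT
    have p1 := win_nonneg (t - a + b - c) (t - a + b + c) T'
    have p2 := win_nonneg (t - a - b - c) (t - a - b + c) T'
    by_cases h : t + c - a + b < T ∧ T ≤ t + a + b + c
    · have e : win (t + c - a + b) (t + a + b + c) T = 1 := if_pos h
      rcases hT with ⟨h1, h2⟩ | ⟨h1, h2⟩
      · by_cases h3 : t - a + b - c < T'
        · have := win_pos h3 (show T' ≤ t - a + b + c by linarith [h.2])
          linarith
        · have := win_pos (show t - a - b - c < T' by linarith [h.1])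
            (show T' ≤ t - a - b + c by linarith [h.2])
          linarith
      · have := win_pos (show t - a + b - c < T' by linarith [h.1])
            (show T' ≤ t - a + b + c by linarith [h.1])
        linarith
    · have e : win (t + c - a + b) (t + a + b + c) T = 0 := if_neg h
      linarith
  rw [EE_add] at a2
  -- the minus-plus pattern
  have b0 : FF c l (t + a - b) ≤
      EE l (win (t + a - b - c) (min (t + a - b + c) (t + c - a - b))) +
      EE l (win (t + c - a - b) (t + a - b + c)) := by
    rw [← EE_add]
    exact EE_mono _ _ _ fun s => win_split _ _ _ _
  have b1 : EE l (win (t + a - b - c) (min (t + a - b + c) (t + c - a - b)))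
      ≤ FF c l (t - a - b) := by
    apply EE_mono
    intro s
    apply win_le
    intro h1 h2
    simp only [le_min_iff] at h2
    constructor <;> linarith
  have b2 : EE l (win (t + c - a - b) (t + a - b + c)) ≤
      EE l (win (t + c - a - b) (min (t + a - b + c) (t + c - a + b))) +
      EE l (win (t + c - a + b) (t + a - b + c)) := by
    rw [← EE_add]
    exact EE_mono _ _ _ fun s => win_split _ _ _ _
  have b3 : EE l (win (t + c - a - b) (min (t + a - b + c) (t + c - a + b)))
      ≤ FF c l (t - a + b) := by
    apply EE_mono
    intro s
    apply win_le
    intro h1 h2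
    simp only [le_min_iff] at h2
    constructor <;> linarith
  have b4 : EE l (win (t + c - a + b) (t + a - b + c)) ≤ FF c l (t - a - b) := by
    apply reflect b l a _ _ (by linarith) hl
    intro T T' hT
    apply win_le
    intro g1 g2
    rcases hT with ⟨h1, h2⟩ | ⟨h1, h2⟩
    · constructor <;> linarith
    · constructor <;> linarith
  rw [FF_cons, FF_cons, FF_cons, FF_cons]
  have e1 : EE l (fun s => win (t - a + b - c) (t - a + b + c) s) = FF c l (t - a + b) := rfl
  have e2 : EE l (fun s => win (t - a - b - c) (t - a - b + c) s) = FF c l (t - a - b) := rfl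
  linarith

theorem lemY1 (c a t : ℝ) (ht : 0 ≤ t) (hac : a ≤ c) (ha : 0 < a) :
    4 * FF c [] (t + a) ≤ 3 * FF c [a] t := by
  rw [FF_cons]
  have h : FF c [] (t + a) ≤ FF c [] (t - a) := by
    simp only [FF, EE]
    apply win_le
    intro h1 h2
    constructor <;> linarith
  have := FF_nonneg c [] (t + a)
  linarith

theorem K_bound (c : ℝ) : ∀ (l : List ℝ) (t : ℝ), 0 ≤ t → (∀ e ∈ l, 0 < e ∧ e ≤ c) →
    l.Pairwise (fun x y => y ≤ x) → KK c l t ≤ FF c l t + 2 * F1 c l t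
  | [], t, _, _, _ => by
    simp only [KK, F1]
    linarith [FF_nonneg c [] t]
  | [a], t, _, _, _ => by
    simp only [KK, F1]
    linarith [FF_nonneg c [a] t, FF_nonneg c [] (t + a)]
  | a :: b :: l, t, ht, hl, hs => by
    have ha := hl a (by simp)
    have hb := hl b (by simp)
    simp only [List.pairwise_cons, List.mem_cons, forall_eq_or_imp] at hs
    obtain ⟨⟨hba, _⟩, hlb, hs'⟩ := hs
    have hl' : ∀ e ∈ l, 0 < e ∧ e ≤ c := fun e he => hl e (by simp [he])
    have ih := K_bound c l (t + a + b) (by linarith) hl' hs'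
    have x1 := lemX c a b t l ht ha.2 hba hb.1 (fun e he => ⟨(hl' e he).1, hlb e he⟩)
    have x2 : 2 * F1 c l (t + a + b) ≤ FF c (b :: l) (t + a) := by
      match l, hl', hlb, hs' with
      | [], _, _, _ => simp only [F1]; linarith [FF_nonneg c [b] (t + a)]
      | e :: l', hl', hlb, hs' =>
        have he := hlb e (by simp)
        have hsl := List.pairwise_cons.1 hs'
        exact lemX c b e (t + a) l' (by linarith) hb.2 he (hl' e (by simp)).1
          (fun x hx => ⟨(hl' x (by simp [hx])).1, hsl.1 x hx⟩)
    simp only [KK, F1]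
    linarith

theorem K_final (c : ℝ) (l : List ℝ) (t : ℝ) (ht : 0 ≤ t) (hl : ∀ e ∈ l, 0 < e ∧ e ≤ c)
    (hs : l.Pairwise (fun x y => y ≤ x)) : KK c l t ≤ 5 / 2 * FF c l t := by
  have h := K_bound c l t ht hl hs
  have h2 : 4 * F1 c l t ≤ 3 * FF c l t := by
    match l, hl, hs with
    | [], _, _ => simp only [F1]; linarith [FF_nonneg c [] t]
    | [a], hl, _ => exact lemY1 c a t ht (hl a (by simp)).2 (hl a (by simp)).1
    | a :: b :: l, hl, hs =>
      have ha := hl a (by simp)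
      have hb := hl b (by simp)
      simp only [List.pairwise_cons, List.mem_cons, forall_eq_or_imp] at hs
      obtain ⟨⟨hba, _⟩, hlb, hs'⟩ := hs
      exact lemY c a b t l ht ha.2 hba hb.1 (fun e he => ⟨(hl e (by simp [he])).1, hlb e he⟩)
  linarith

theorem sum_cube_succ (n : ℕ) (g : (Fin (n + 1) → Bool) → ℝ) :
    ∑ x, g x = ∑ y : Fin n → Bool, g (Fin.cons true y) +
      ∑ y : Fin n → Bool, g (Fin.cons false y) := by
  rw [← (Fin.consEquiv (fun _ : Fin (n + 1) => Bool)).sum_comp, Fintype.sum_prod_type,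
    Fintype.sum_bool]
  rfl

theorem lin_cons (n : ℕ) (a : Fin (n + 1) → ℝ) (b : Bool) (y : Fin n → Bool) :
    lin (n + 1) a (Fin.cons b y) = a 0 * sgn1 b + lin n (Fin.tail a) y := by
  simp [lin, Fin.sum_univ_succ, Fin.tail]

theorem sum_lin (n : ℕ) : ∀ (a : Fin n → ℝ) (f : ℝ → ℝ),
    ∑ x, f (lin n a x) = EE (List.ofFn a) f := by
  induction n with
  | zero => intro a f; simp [lin, EE]
  | succ n ih =>
    intro a f
    rw [sum_cube_succ, List.ofFn_succ]
    simp only [lin_cons, EE]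
    have h : (fun i : Fin n => a i.succ) = Fin.tail a := rfl
    rw [h, ← ih, ← ih]
    congr 1 <;> refine Finset.sum_congr rfl fun x _ => ?_ <;> congr 1 <;> simp [sgn1] <;> ring

/-- Number of points of the inner vertex boundary. -/
def vb (n : ℕ) (a : Fin n → ℝ) (t : ℝ) : ℝ :=
  ∑ x, if t < lin n a x ∧ ∃ i, lin n a (Function.update x i (!x i)) ≤ t then (1 : ℝ) else 0

theorem lin_update (n : ℕ) (a : Fin n → ℝ) (x : Fin n → Bool) (i : Fin n) :
    lin n a (Function.update x i (!x i)) = lin n a x - 2 * (a i * sgn1 (x i)) := by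
  have h : lin n a (Function.update x i (!x i)) - lin n a x = - 2 * (a i * sgn1 (x i)) := by
    unfold lin
    rw [← Finset.sum_sub_distrib, Finset.sum_eq_single i]
    · cases h : x i <;> simp [sgn1] <;> ring
    · intro j _ hj
      simp [Function.update_of_ne hj]
    · simp
  linarith

theorem sgn1_le (b : Bool) : sgn1 b ≤ 1 := by
  cases b <;> simp [sgn1]

theorem vb_succ (n : ℕ) (a : Fin (n + 1) → ℝ) (t : ℝ) (ha : ∀ i, 0 < a i)
    (hm : ∀ i, a i ≤ a 0) :
    vb (n + 1) a t ≤ FF (a 0) (List.ofFn (Fin.tail a)) t + vb n (Fin.tail a) (t + a 0) := by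
  unfold vb FF
  rw [sum_cube_succ, ← sum_lin]
  apply add_le_add
  · refine Finset.sum_le_sum fun y _ => ?_
    unfold win
    split_ifs with h1 h2 <;> try norm_num
    apply h2
    obtain ⟨g1, i, g2⟩ := h1
    rw [lin_update] at g2
    rw [lin_cons] at g1 g2
    have h3 : a i * sgn1 ((Fin.cons true y : Fin (n + 1) → Bool) i) ≤ a 0 := by
      have := mul_le_mul_of_nonneg_left
        (sgn1_le ((Fin.cons true y : Fin (n + 1) → Bool) i)) (ha i).le
      linarith [hm i]
    have h4 : sgn1 true = 1 := by simp [sgn1]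
    rw [h4] at g1 g2
    constructor <;> linarith
  · refine Finset.sum_le_sum fun y _ => ?_
    split_ifs with h1 h2 <;> try norm_num
    apply h2
    obtain ⟨g1, i, g2⟩ := h1
    have h4 : sgn1 false = -1 := by simp [sgn1]
    rw [lin_update] at g2
    rw [lin_cons, h4] at g1 g2
    refine ⟨by linarith, ?_⟩
    refine Fin.cases ?_ (fun i g2 => ?_) i g2
    · intro g2
      simp only [Fin.cons_zero, h4] at g2
      linarith [ha 0]
    · refine ⟨i, ?_⟩
      rw [lin_update]
      simp only [Fin.cons_succ] at g2
      simp only [Fin.tail] at *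
      linarith

theorem vb_le_KK (c : ℝ) (n : ℕ) : ∀ (a : Fin n → ℝ) (t : ℝ), (∀ i, 0 < a i) →
    (∀ i j : Fin n, i ≤ j → a j ≤ a i) → (∀ i, a i ≤ c) →
    vb n a (t + c) ≤ KK c (List.ofFn a) t := by
  induction n with
  | zero => intro a t _ _ _; simp [vb, KK]
  | succ n ih =>
    intro a t ha hm hc
    have h1 := vb_succ n a (t + c) ha (fun i => hm 0 i (Fin.zero_le i))
    have h2 := ih (Fin.tail a) (t + a 0) (fun i => ha _)
      (fun i j hij => hm _ _ (Fin.succ_le_succ_iff.2 hij)) (fun i => hc _)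
    have h3 : FF (a 0) (List.ofFn (Fin.tail a)) (t + c) ≤
        FF c (List.ofFn (Fin.tail a)) (t + a 0) := by
      apply EE_mono
      intro s
      apply win_le
      intro g1 g2
      constructor <;> linarith [hc 0]
    rw [List.ofFn_succ]
    simp only [KK]
    have h : (fun i : Fin n => a i.succ) = Fin.tail a := rfl
    rw [h]
    have e : t + c + a 0 = t + a 0 + c := by ring
    rw [e] at h1
    linarith

theorem vb_main (n : ℕ) (a : Fin (n + 1) → ℝ) (t : ℝ) (ht : 0 ≤ t) (ha : ∀ i, 0 < a i)
    (hm : ∀ i j : Fin (n + 1), i ≤ j → a j ≤ a i) :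
    vb (n + 1) a t ≤ 7 / 2 * FF (a 0) (List.ofFn (Fin.tail a)) t := by
  have h0 : ∀ i, a i ≤ a 0 := fun i => hm 0 i (Fin.zero_le i)
  have h1 := vb_succ n a t ha h0
  have h2 := vb_le_KK (a 0) n (Fin.tail a) t (fun i => ha _)
      (fun i j hij => hm _ _ (Fin.succ_le_succ_iff.2 hij)) (fun i => h0 _)
  have h3 := K_final (a 0) (List.ofFn (Fin.tail a)) t ht (by
    intro e he
    obtain ⟨i, rfl⟩ := (List.mem_ofFn' _ _).1 he
    exact ⟨ha _, h0 _⟩) (by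
    rw [List.pairwise_ofFn]
    intro i j hij
    exact hm _ _ (Fin.succ_le_succ_iff.2 hij.le))
  linarith

theorem card_eq_sum (n : ℕ) (P : (Fin n → Bool) → Prop) :
    cubePr n P = (∑ x, if P x then (1 : ℝ) else 0) / 2 ^ n := by
  unfold cubePr
  rw [Finset.sum_boole]

theorem halfspace_eq_one (n : ℕ) (a : Fin n → ℝ) (t : ℝ) (x : Fin n → Bool) :
    halfspace n a t x = 1 ↔ t < lin n a x := by
  unfold halfspace; split_ifs with h <;> simp [h]

theorem halfspace_eq_zero (n : ℕ) (a : Fin n → ℝ) (t : ℝ) (x : Fin n → Bool) :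
    halfspace n a t x = 0 ↔ lin n a x ≤ t := by
  unfold halfspace; split_ifs with h <;> simpa using h

theorem infl_eq (n : ℕ) (a : Fin (n + 1) → ℝ) (t : ℝ) (ha : 0 < a 0) :
    infl (n + 1) 0 (halfspace (n + 1) a t) =
      2 * FF (a 0) (List.ofFn (Fin.tail a)) t / 2 ^ (n + 1) := by
  unfold infl
  rw [card_eq_sum, sum_cube_succ]
  congr 1
  unfold FF
  rw [← sum_lin, two_mul]
  congr 1 <;> refine Finset.sum_congr rfl fun y _ => ?_ <;> unfold win <;> congr 1 <;>
    apply propext <;> unfold halfspace <;> rw [lin_update, lin_cons] <;>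
    simp only [Fin.cons_zero, sgn1] <;> simp only [if_true, Bool.false_eq_true, if_false] <;>
    split_ifs <;> constructor <;> intro h <;>
    first
    | (constructor <;> linarith)
    | (exfalso; linarith [h.1, h.2])
    | (norm_num; done)
    | (exfalso; exact h rfl)

theorem lin_neg (n : ℕ) (a : Fin n → ℝ) (x : Fin n → Bool) :
    lin n a (fun i => !x i) = - lin n a x := by
  unfold lin
  rw [← Finset.sum_neg_distrib]
  refine Finset.sum_congr rfl fun i _ => ?_
  cases h : x i <;> simp [sgn1, h]

theorem neg_case (n : ℕ) (a : Fin n → ℝ) (t : ℝ) (ht : t < 0)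
    (hμ : cubeE n (halfspace n a t) ≤ 1 / 2) : halfspace n a t = halfspace n a 0 := by
  by_contra hne
  obtain ⟨x, hx⟩ := Function.ne_iff.1 hne
  have hx1 : t < lin n a x ∧ lin n a x ≤ 0 := by
    unfold halfspace at hx
    split_ifs at hx with h1 h2 h2
    · exact absurd rfl hx
    · exact ⟨h1, not_lt.1 h2⟩
    · linarith
    · exact absurd rfl hx
  have hinv : Function.Involutive (fun (x : Fin n → Bool) i => !x i) := by
    intro x; funext i; simp
  have hs : ∑ y : Fin n → Bool, halfspace n a t (fun i => !y i) = ∑ y, halfspace n a t y :=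
    Equiv.sum_comp (hinv.toPerm _) (halfspace n a t)
  have hlt : ∑ _y : Fin n → Bool, (1 : ℝ) <
      ∑ y : Fin n → Bool, (halfspace n a t y + halfspace n a t (fun i => !y i)) := by
    apply Finset.sum_lt_sum
    · intro y _
      unfold halfspace
      rw [lin_neg]
      split_ifs <;> first | norm_num; done | (exfalso; linarith)
    · refine ⟨x, Finset.mem_univ _, ?_⟩
      unfold halfspace
      rw [lin_neg, if_pos hx1.1, if_pos (by linarith [hx1.2])]
      norm_num
  rw [Finset.sum_add_distrib, hs] at hlt
  simp at hlt
  unfold cubeE at hμ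
  rw [div_le_iff₀ (by positivity)] at hμ
  linarith

theorem main_nonneg (n : ℕ) (a : Fin (n + 1) → ℝ) (t : ℝ) (ht : 0 ≤ t)
    (ha : ∀ i, 0 < a i) (hmono : ∀ i j : Fin (n + 1), i ≤ j → a j ≤ a i) :
    (1 / 2) * infl (n + 1) 0 (halfspace (n + 1) a t) ≤
        cubePr (n + 1) (fun x => halfspace (n + 1) a t x = 1 ∧
          ∃ i, halfspace (n + 1) a t (Function.update x i (!x i)) = 0) ∧
      cubePr (n + 1) (fun x => halfspace (n + 1) a t x = 1 ∧
          ∃ i, halfspace (n + 1) a t (Function.update x i (!x i)) = 0) ≤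
        (7 / 4) * infl (n + 1) 0 (halfspace (n + 1) a t) := by
  rw [infl_eq n a t (ha 0), card_eq_sum]
  simp only [halfspace_eq_one, halfspace_eq_zero]
  have hvb : (∑ x, if t < lin (n + 1) a x ∧
      ∃ i, lin (n + 1) a (Function.update x i (!x i)) ≤ t then (1 : ℝ) else 0) =
      vb (n + 1) a t := rfl
  rw [hvb]
  have hp : (0 : ℝ) < 2 ^ (n + 1) := by positivity
  constructor
  · rw [← mul_div_assoc]
    apply div_le_div_of_nonneg_right _ hp.le
    unfold vb
    rw [sum_cube_succ]
    have h1 : FF (a 0) (List.ofFn (Fin.tail a)) t ≤ ∑ y : Fin n → Bool,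
        if t < lin (n + 1) a (Fin.cons true y) ∧ ∃ i, lin (n + 1) a (Function.update
          (Fin.cons true y : Fin (n + 1) → Bool) i
          (!(Fin.cons true y : Fin (n + 1) → Bool) i)) ≤ t then (1 : ℝ) else 0 := by
      unfold FF
      rw [← sum_lin]
      refine Finset.sum_le_sum fun y _ => ?_
      unfold win
      split_ifs with h1 h2 h2 <;> try norm_num
      apply h2
      refine ⟨?_, 0, ?_⟩
      · rw [lin_cons]; simp [sgn1]; linarith [h1.1]
      · rw [lin_update, lin_cons]; simp [sgn1]; linarith [h1.2]
    have h2 : 0 ≤ ∑ y : Fin n → Bool,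
        if t < lin (n + 1) a (Fin.cons false y) ∧ ∃ i, lin (n + 1) a (Function.update
          (Fin.cons false y : Fin (n + 1) → Bool) i
          (!(Fin.cons false y : Fin (n + 1) → Bool) i)) ≤ t then (1 : ℝ) else 0 := by
      apply Finset.sum_nonneg
      intro y _
      split_ifs <;> norm_num
    linarith
  · rw [← mul_div_assoc]
    apply div_le_div_of_nonneg_right _ hp.le
    have := vb_main n a t ht ha hmono
    linarith

/-- **The inner vertex boundary of a halfspace is comparable to the first
influence.** For a halfspace `f_t = 1{a·x > t}` with `a₁ ≥ ... ≥ aₙ > 0` and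
`E[f_t] ≤ 1/2`: `(1/2)·I₁(f_t) ≤ VB₁(f_t) ≤ (7/4)·I₁(f_t)`, where `VB₁(f)` is
the probability that `f(x) = 1` and some single-coordinate flip changes `f`. -/
theorem vertex_boundary_halfspace (n : ℕ) (hn : 0 < n) (a : Fin n → ℝ) (t : ℝ)
    (ha : ∀ i, 0 < a i) (hmono : ∀ i j : Fin n, i ≤ j → a j ≤ a i)
    (hμ : cubeE n (halfspace n a t) ≤ 1 / 2) :
    (1 / 2) * infl n ⟨0, hn⟩ (halfspace n a t) ≤
        cubePr n (fun x => halfspace n a t x = 1 ∧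
          ∃ i, halfspace n a t (Function.update x i (!x i)) = 0) ∧
      cubePr n (fun x => halfspace n a t x = 1 ∧
          ∃ i, halfspace n a t (Function.update x i (!x i)) = 0) ≤
        (7 / 4) * infl n ⟨0, hn⟩ (halfspace n a t) := by
  obtain ⟨m, rfl⟩ : ∃ m, n = m + 1 := ⟨n - 1, by omega⟩
  rcases le_or_gt 0 t with ht | ht
  · exact main_nonneg m a t ht ha hmono
  · rw [neg_case (m + 1) a t ht hμ]
    exact main_nonneg m a 0 le_rfl ha hmono

end
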